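/- Let Ω ⊆ ℝ^N be Lebesgue measurable of finite measure and r < -N. Then the upper spherical Minkowski content at the north pole relative to Ψ(Ω) satisfies the lower bound M̄_S^r(N, Ψ(Ω)) ≥ (2^r / φ^{2N})(1 - φ^{N+r}) M̄^r(∞,Ω) for every φ > 1; optimizing over φ yields M̄_S^r(N, Ψ(Ω)) ≥ -((N+r)/(N-r)) (2N/(N-r))^{-(N+r)/(N-r)} 2^r M̄^r(∞,Ω). -/

import Mathlib

open MeasureTheory Filter Set
open scoped ENNReal NNReal Topology

noncomputable section

/-- The `[a,b)`-shell centered at the origin in `ℝ^N`. -/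
def shell (N : ℕ) (a b : ℝ) : Set (EuclideanSpace ℝ (Fin N)) :=
  {x | a ≤ ‖x‖ ∧ ‖x‖ < b}

/-- The complement of the open ball `B_t(0)` in `ℝ^N`. -/
def farBall (N : ℕ) (t : ℝ) : Set (EuclideanSpace ℝ (Fin N)) :=
  {x | t ≤ ‖x‖}

/-- Upper φ-shell Minkowski content of `Ω` at infinity. -/
def upperShellContent (N : ℕ) (Ω : Set (EuclideanSpace ℝ (Fin N))) (φ r : ℝ) : ℝ≥0∞ :=
  Filter.limsup (fun t : ℝ =>
    volume (shell N t (φ * t) ∩ Ω) / ENNReal.ofReal (t ^ ((N : ℝ) + r))) Filter.atTop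

/-- Lower φ-shell Minkowski content of `Ω` at infinity. -/
def lowerShellContent (N : ℕ) (Ω : Set (EuclideanSpace ℝ (Fin N))) (φ r : ℝ) : ℝ≥0∞ :=
  Filter.liminf (fun t : ℝ =>
    volume (shell N t (φ * t) ∩ Ω) / ENNReal.ofReal (t ^ ((N : ℝ) + r))) Filter.atTop

/-- Upper Minkowski content of `Ω` at infinity. -/
def upperContent (N : ℕ) (Ω : Set (EuclideanSpace ℝ (Fin N))) (r : ℝ) : ℝ≥0∞ :=
  Filter.limsup (fun t : ℝ =>
    volume (farBall N t ∩ Ω) / ENNReal.ofReal (t ^ ((N : ℝ) + r))) Filter.atTop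

/-- Lower Minkowski content of `Ω` at infinity. -/
def lowerContent (N : ℕ) (Ω : Set (EuclideanSpace ℝ (Fin N))) (r : ℝ) : ℝ≥0∞ :=
  Filter.liminf (fun t : ℝ =>
    volume (farBall N t ∩ Ω) / ENNReal.ofReal (t ^ ((N : ℝ) + r))) Filter.atTop

/-- Upper φ-shell Minkowski dimension of `Ω` at infinity, as an extended real. -/
def upperShellDim (N : ℕ) (Ω : Set (EuclideanSpace ℝ (Fin N))) (φ : ℝ) : EReal :=
  sInf ((fun r : ℝ => (r : EReal)) '' {r : ℝ | upperShellContent N Ω φ r = 0})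

/-- Lower φ-shell Minkowski dimension of `Ω` at infinity, as an extended real. -/
def lowerShellDim (N : ℕ) (Ω : Set (EuclideanSpace ℝ (Fin N))) (φ : ℝ) : EReal :=
  sInf ((fun r : ℝ => (r : EReal)) '' {r : ℝ | lowerShellContent N Ω φ r = 0})

/-- The spherical volume of the image of a set `E ⊆ ℝ^N` under stereographic projection,
expressed by the change-of-variables formula `|Ψ(E)|_S = ∫_E 2^N/(1+|x|²)^N dx`. -/
def sphericalVolume (N : ℕ) (E : Set (EuclideanSpace ℝ (Fin N))) : ℝ≥0∞ :=
  ∫⁻ x in E, ENNReal.ofReal ((2 : ℝ) ^ (N : ℝ) / (1 + ‖x‖ ^ 2) ^ (N : ℝ))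

/-- Upper spherical Minkowski content of the north pole relative to `Ψ(Ω)`, using the identity
`Ψ⁻¹({N}_{δ,S} ∩ Ψ(Ω)) = B_{cot(δ/2)}(0)ᶜ ∩ Ω`. -/
def upperSphericalContent (N : ℕ) (Ω : Set (EuclideanSpace ℝ (Fin N))) (r : ℝ) : ℝ≥0∞ :=
  Filter.limsup (fun δ : ℝ =>
    sphericalVolume N (farBall N (Real.cot (δ / 2)) ∩ Ω) / ENNReal.ofReal (δ ^ ((N : ℝ) - r)))
    (nhdsWithin 0 (Ioi 0))

/-- Lower spherical Minkowski content of the north pole relative to `Ψ(Ω)`. -/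
def lowerSphericalContent (N : ℕ) (Ω : Set (EuclideanSpace ℝ (Fin N))) (r : ℝ) : ℝ≥0∞ :=
  Filter.liminf (fun δ : ℝ =>
    sphericalVolume N (farBall N (Real.cot (δ / 2)) ∩ Ω) / ENNReal.ofReal (δ ^ ((N : ℝ) - r)))
    (nhdsWithin 0 (Ioi 0))

/-! Let `σ` be the spherical volume pulled back to `ℝ^N`. Its density is `(2 / (1 + |x|²))^N`, so
far out Lebesgue measure is about `2^{-N} |x|^{2N} dσ`. Any constant `d` above the spherical
content bounds the tails, `σ(Ω ∩ {|x| ≥ u}) ≤ d (2/u)^{N-r}` for large `u`, and integrating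
`|x|^{2N}` against these tails (layer cake) gives
`|Ω ∩ {|x| ≥ t}| ≲ d 2^{-r} (N-r)/(-(N+r)) t^{N+r}`. The resulting constant `-(N+r)/(N-r) 2^r`
dominates both constants of the theorem. The second one does not come from the first by optimizing
over `φ`: the supremum over `φ > 1` has `-2N/(N+r)` in place of the outer exponent
`-(N+r)/(N-r)`, and can be smaller. -/

lemma lintegral_Ioc_zero_rpow {a t : ℝ} (ha : -1 < a) (ht : 0 ≤ t) :
    ∫⁻ u in Ioc 0 t, ENNReal.ofReal (u ^ a) = ENNReal.ofReal (t ^ (a + 1) / (a + 1)) := by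
  have nonneg : 0 ≤ᵐ[volume.restrict (Ioc 0 t)] fun u : ℝ => u ^ a := by
    filter_upwards [ae_restrict_mem measurableSet_Ioc] with u hu
    exact Real.rpow_nonneg hu.1.le a
  rw [← ofReal_integral_eq_lintegral_ofReal (intervalIntegral.intervalIntegrable_rpow' ha).1 nonneg,
    ← intervalIntegral.integral_of_le ht, integral_rpow (Or.inl ha),
    Real.zero_rpow (by linarith), sub_zero]

lemma lintegral_Ioi_rpow {a t : ℝ} (ha : a < -1) (ht : 0 < t) :
    ∫⁻ u in Ioi t, ENNReal.ofReal (u ^ a) = ENNReal.ofReal (t ^ (a + 1) / -(a + 1)) := by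
  have nonneg : 0 ≤ᵐ[volume.restrict (Ioi t)] fun u : ℝ => u ^ a := by
    filter_upwards [ae_restrict_mem measurableSet_Ioi] with u hu
    exact Real.rpow_nonneg (ht.trans hu).le a
  rw [← ofReal_integral_eq_lintegral_ofReal (integrableOn_Ioi_rpow_of_lt ha ht) nonneg,
    integral_Ioi_rpow_of_lt ha ht, div_neg, neg_div]

lemma lintegral_Ioi_max_rpow_mul_rpow {p q t : ℝ} (hp : 0 < p) (hpq : p < q) (ht : 0 < t) :
    ∫⁻ u in Ioi 0, ENNReal.ofReal (max u t ^ (-q)) * ENNReal.ofReal (u ^ (p - 1)) =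
      ENNReal.ofReal (q / (p * (q - p)) * t ^ (p - q)) := by
  have hqp : 0 < q - p := sub_pos.2 hpq
  have near : ∫⁻ u in Ioc 0 t, ENNReal.ofReal (max u t ^ (-q)) * ENNReal.ofReal (u ^ (p - 1)) =
      ENNReal.ofReal (t ^ (p - q) / p) := by
    calc
      _ = ∫⁻ u in Ioc 0 t, ENNReal.ofReal (t ^ (-q)) * ENNReal.ofReal (u ^ (p - 1)) :=
        setLIntegral_congr_fun measurableSet_Ioc fun u hu => by simp only [max_eq_right hu.2]
      _ = ENNReal.ofReal (t ^ (-q) * (t ^ p / p)) := by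
        rw [lintegral_const_mul' _ _ ENNReal.ofReal_ne_top,
          lintegral_Ioc_zero_rpow (by linarith) ht.le, sub_add_cancel,
          ← ENNReal.ofReal_mul (by positivity)]
      _ = _ := by rw [← mul_div_assoc, ← Real.rpow_add ht, neg_add_eq_sub]
  have far : ∫⁻ u in Ioi t, ENNReal.ofReal (max u t ^ (-q)) * ENNReal.ofReal (u ^ (p - 1)) =
      ENNReal.ofReal (t ^ (p - q) / (q - p)) := by
    calc
      _ = ∫⁻ u in Ioi t, ENNReal.ofReal (u ^ (p - q - 1)) :=
        setLIntegral_congr_fun measurableSet_Ioi fun u (hu : t < u) => by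
          have hu0 : 0 < u := ht.trans hu
          simp only [max_eq_left hu.le]
          rw [← ENNReal.ofReal_mul (by positivity), ← Real.rpow_add hu0]
          ring_nf
      _ = _ := by rw [lintegral_Ioi_rpow (by linarith) ht, sub_add_cancel, neg_sub]
  rw [← Ioc_union_Ioi_eq_Ioi ht.le, lintegral_union measurableSet_Ioi (Ioc_disjoint_Ioi le_rfl),
    near, far, ← ENNReal.ofReal_add (by positivity) (by positivity)]
  congr 1
  field_simp
  ring

lemma setLIntegral_rpow_le_of_tail_le {α : Type*} [MeasurableSpace α] {μ : Measure α} {f : α → ℝ}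
    (hf : Measurable f) {p q t : ℝ} {K : ℝ≥0∞} (hp : 0 ≤ p) (hpq : p < q) (ht : 0 < t)
    (tail : ∀ u, t ≤ u → μ {x | u ≤ f x} ≤ K * ENNReal.ofReal (u ^ (-q))) :
    ∫⁻ x in {x | t ≤ f x}, ENNReal.ofReal (f x ^ p) ∂μ ≤
      K * ENNReal.ofReal (q / (q - p) * t ^ (p - q)) := by
  rcases hp.eq_or_lt with rfl | hp
  · simpa [hpq.ne'] using tail t le_rfl
  have superlevel_meas (u : ℝ) : MeasurableSet {x | u ≤ f x} := measurableSet_le measurable_const hf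
  have nonneg : 0 ≤ᵐ[μ.restrict {x | t ≤ f x}] f := by
    filter_upwards [ae_restrict_mem (superlevel_meas t)] with x hx
    exact ht.le.trans hx
  have restrict_tail (u : ℝ) :
      μ.restrict {x | t ≤ f x} {x | u ≤ f x} ≤ K * ENNReal.ofReal (max u t ^ (-q)) := by
    rw [Measure.restrict_apply (superlevel_meas u), ← ofPred_and]
    simpa only [max_le_iff] using tail (max u t) (le_max_right u t)
  calc
    _ = ENNReal.ofReal p * ∫⁻ u in Ioi 0,
          μ.restrict {x | t ≤ f x} {x | u ≤ f x} * ENNReal.ofReal (u ^ (p - 1)) :=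
      lintegral_rpow_eq_lintegral_meas_le_mul _ nonneg hf.aemeasurable hp
    _ ≤ ENNReal.ofReal p * ∫⁻ u in Ioi 0,
          K * (ENNReal.ofReal (max u t ^ (-q)) * ENNReal.ofReal (u ^ (p - 1))) := by
      simp only [← mul_assoc]
      gcongr with u
      exact restrict_tail u
    _ = K * ENNReal.ofReal (q / (q - p) * t ^ (p - q)) := by
      rw [lintegral_const_mul _ (by fun_prop), lintegral_Ioi_max_rpow_mul_rpow hp hpq ht,
        mul_left_comm, ← ENNReal.ofReal_mul hp.le]
      congr 2
      field_simp

section StereographicMeasure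

variable {N : ℕ} {Ω : Set (EuclideanSpace ℝ (Fin N))}

/-- The surface measure of the sphere `S^N` pulled back to `ℝ^N` by stereographic projection, so
that `sphericalVolume` becomes a measure against which one can integrate. -/
def stereographicMeasure (N : ℕ) : Measure (EuclideanSpace ℝ (Fin N)) :=
  volume.withDensity fun x => ENNReal.ofReal ((2 : ℝ) ^ (N : ℝ) / (1 + ‖x‖ ^ 2) ^ (N : ℝ))

lemma stereographicMeasure_apply (E : Set (EuclideanSpace ℝ (Fin N))) :
    stereographicMeasure N E = sphericalVolume N E :=
  withDensity_apply' _ E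

lemma volume_eq_setLIntegral_stereographicMeasure (E : Set (EuclideanSpace ℝ (Fin N))) :
    volume E = ∫⁻ x in E, ENNReal.ofReal (((1 + ‖x‖ ^ 2) / 2) ^ N) ∂stereographicMeasure N := by
  rw [stereographicMeasure, setLIntegral_withDensity_eq_setLIntegral_mul_non_measurable₀' volume
    E (by fun_prop) _ (ae_of_all _ fun _ => ENNReal.ofReal_lt_top), ← setLIntegral_one]
  refine lintegral_congr fun x => ?_
  have : 0 < 1 + ‖x‖ ^ 2 := by positivity
  rw [Pi.mul_apply, ← ENNReal.ofReal_mul (by positivity), Real.rpow_natCast, Real.rpow_natCast,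
    ← div_pow, ← mul_pow, div_mul_div_cancel₀ this.ne', div_self two_ne_zero, one_pow,
    ENNReal.ofReal_one]

lemma measurableSet_farBall (t : ℝ) : MeasurableSet (farBall N t) :=
  measurableSet_le measurable_const measurable_norm

lemma volume_farBall_inter_le_setLIntegral {t : ℝ} (ht : 0 < t) :
    volume (farBall N t ∩ Ω) ≤ ENNReal.ofReal (((1 + (t ^ 2)⁻¹) / 2) ^ N) *
      ∫⁻ x in farBall N t ∩ Ω, ENNReal.ofReal (‖x‖ ^ (2 * (N : ℝ))) ∂stereographicMeasure N := by
  rw [volume_eq_setLIntegral_stereographicMeasure,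
    ← lintegral_const_mul' _ _ ENNReal.ofReal_ne_top]
  refine setLIntegral_mono (by fun_prop) fun x hx => ?_
  have one_le : 1 ≤ (t ^ 2)⁻¹ * ‖x‖ ^ 2 := by
    rw [inv_mul_eq_div, one_le_div (by positivity)]
    exact pow_le_pow_left₀ ht.le hx.1 2
  rw [← ENNReal.ofReal_mul (by positivity), Real.rpow_mul (norm_nonneg x), Real.rpow_two,
    Real.rpow_natCast, ← mul_pow]
  gcongr ENNReal.ofReal (?_ ^ N)
  linarith

lemma volume_farBall_inter_le_of_tail_le {q t : ℝ} {K : ℝ≥0∞} (hq : 2 * (N : ℝ) < q) (ht : 0 < t)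
    (tail : ∀ u, t ≤ u → sphericalVolume N (farBall N u ∩ Ω) ≤ K * ENNReal.ofReal (u ^ (-q))) :
    volume (farBall N t ∩ Ω) ≤ K * ENNReal.ofReal
      (((1 + (t ^ 2)⁻¹) / 2) ^ N * (q / (q - 2 * N) * t ^ (2 * (N : ℝ) - q))) := by
  have moment : ∫⁻ x in farBall N t ∩ Ω,
      ENNReal.ofReal (‖x‖ ^ (2 * (N : ℝ))) ∂stereographicMeasure N ≤
        K * ENNReal.ofReal (q / (q - 2 * N) * t ^ (2 * (N : ℝ) - q)) := by
    rw [← Measure.restrict_restrict (measurableSet_farBall t)]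
    refine setLIntegral_rpow_le_of_tail_le measurable_norm (by positivity) hq ht fun u hu => ?_
    change (stereographicMeasure N).restrict Ω (farBall N u) ≤ _
    rw [Measure.restrict_apply (measurableSet_farBall u), stereographicMeasure_apply]
    exact tail u hu
  grw [volume_farBall_inter_le_setLIntegral ht, moment]
  rw [mul_left_comm, ← ENNReal.ofReal_mul (by positivity)]

end StereographicMeasure

section ContentComparison

variable {N : ℕ} {Ω : Set (EuclideanSpace ℝ (Fin N))} {r : ℝ}

lemma tendsto_two_mul_arctan_inv_atTop :
    Tendsto (fun u : ℝ => 2 * Real.arctan u⁻¹) atTop (𝓝[>] 0) := by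
  refine tendsto_nhdsWithin_iff.2 ⟨?_, ?_⟩
  · simpa using
      ((Real.continuous_arctan.tendsto 0).comp tendsto_inv_atTop_zero).const_mul (2 : ℝ)
  · filter_upwards [eventually_gt_atTop 0] with u hu
    exact mul_pos two_pos (Real.arctan_pos.2 (inv_pos.2 hu))

lemma arctan_le_self_of_pos {x : ℝ} (hx : 0 < x) : Real.arctan x ≤ x := by
  simpa using Real.le_tan (Real.arctan_pos.2 hx).le (Real.arctan_lt_pi_div_two x)

/-- The geodesic radius `δ = 2 arctan (1 / u)` corresponds to the Euclidean radius `u`. -/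
lemma limsup_sphericalVolume_farBall_div_le (hr : r ≤ N) :
    limsup (fun u : ℝ => sphericalVolume N (farBall N u ∩ Ω) /
      ENNReal.ofReal ((2 / u) ^ ((N : ℝ) - r))) atTop ≤ upperSphericalContent N Ω r := by
  refine le_trans (limsup_le_limsup ?_)
    (tendsto_two_mul_arctan_inv_atTop.limsup_comp_le_limsup (by isBoundedDefault)
      (by isBoundedDefault))
  filter_upwards [eventually_gt_atTop 0] with u hu
  have : 0 < Real.arctan u⁻¹ := Real.arctan_pos.2 (inv_pos.2 hu)
  rw [Function.comp_apply, mul_div_cancel_left₀ _ two_ne_zero, ← Real.tan_inv_eq_cot,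
    Real.tan_arctan, inv_inv, div_eq_mul_inv 2 u]
  gcongr
  exact arctan_le_self_of_pos (inv_pos.2 hu)

lemma eventually_sphericalVolume_farBall_le_of_upperSphericalContent_lt {d : ℝ≥0∞} (hr : r ≤ N)
    (hd : upperSphericalContent N Ω r < d) :
    ∀ᶠ u : ℝ in atTop, sphericalVolume N (farBall N u ∩ Ω) ≤
      d * ENNReal.ofReal (2 ^ ((N : ℝ) - r)) * ENNReal.ofReal (u ^ (-((N : ℝ) - r))) := by
  filter_upwards [eventually_lt_of_limsup_lt
    ((limsup_sphericalVolume_farBall_div_le hr).trans_lt hd), eventually_gt_atTop 0] with u hu hu0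
  have scale_pos : 0 < (2 / u) ^ ((N : ℝ) - r) := by positivity
  rw [mul_assoc, ← ENNReal.ofReal_mul (by positivity), Real.rpow_neg hu0.le, ← div_eq_mul_inv,
    ← Real.div_rpow two_pos.le hu0.le]
  exact (ENNReal.div_le_iff (ENNReal.ofReal_pos.2 scale_pos).ne' ENNReal.ofReal_ne_top).1 hu.le

lemma eventually_volume_farBall_div_le_of_upperSphericalContent_lt {d : ℝ≥0∞}
    (hr : r < -(N : ℝ)) (hd : upperSphericalContent N Ω r < d) :
    ∀ᶠ t : ℝ in atTop, volume (farBall N t ∩ Ω) / ENNReal.ofReal (t ^ ((N : ℝ) + r)) ≤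
      ENNReal.ofReal
        ((1 + (t ^ 2)⁻¹) ^ N * (((N : ℝ) - r) / -((N : ℝ) + r) * 2 ^ (-r))) * d := by
  have := N.cast_nonneg (α := ℝ)
  obtain ⟨T, tail⟩ := eventually_atTop.1
    (eventually_sphericalVolume_farBall_le_of_upperSphericalContent_lt (by linarith) hd)
  filter_upwards [eventually_gt_atTop 0, eventually_ge_atTop T] with t ht htT
  have scale_pos : 0 < t ^ ((N : ℝ) + r) := by positivity
  have volume_le := volume_farBall_inter_le_of_tail_le (by linarith) ht
    fun u hu => tail u (htT.trans hu)
  rw [ENNReal.div_le_iff (ENNReal.ofReal_pos.2 scale_pos).ne' ENNReal.ofReal_ne_top]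
  refine volume_le.trans_eq ?_
  rw [mul_assoc, mul_comm (ENNReal.ofReal _) d, mul_assoc, ← ENNReal.ofReal_mul (by positivity),
    ← ENNReal.ofReal_mul' scale_pos.le]
  congr 2
  have exponent_eq : 2 * (N : ℝ) - (N - r) = N + r := by ring
  have denominator_eq : (N : ℝ) - r - 2 * N = -(N + r) := by ring
  rw [exponent_eq, denominator_eq, sub_eq_add_neg (N : ℝ) r, Real.rpow_add two_pos,
    Real.rpow_natCast, div_pow]
  field_simp

lemma upperContent_le_of_upperSphericalContent_lt {d : ℝ≥0∞} (hr : r < -(N : ℝ))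
    (hd : upperSphericalContent N Ω r < d) :
    upperContent N Ω r ≤ ENNReal.ofReal (((N : ℝ) - r) / -((N : ℝ) + r) * 2 ^ (-r)) * d := by
  have := N.cast_nonneg (α := ℝ)
  set C : ℝ := ((N : ℝ) - r) / -((N : ℝ) + r) * 2 ^ (-r)
  have C_pos : 0 < C := mul_pos (div_pos (by linarith) (by linarith)) (by positivity)
  have inv_sq_tendsto : Tendsto (fun t : ℝ => (t ^ 2)⁻¹) atTop (𝓝 0) :=
    tendsto_inv_atTop_zero.comp (tendsto_pow_atTop two_ne_zero)
  have factor_tendsto : Tendsto (fun t : ℝ => (1 + (t ^ 2)⁻¹) ^ N * C) atTop (𝓝 C) := by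
    simpa using ((inv_sq_tendsto.const_add 1).pow N).mul_const C
  rw [← (ENNReal.Tendsto.mul_const (b := d) (ENNReal.tendsto_ofReal factor_tendsto)
    (Or.inl (ENNReal.ofReal_pos.2 C_pos).ne')).limsup_eq]
  exact limsup_le_limsup (eventually_volume_farBall_div_le_of_upperSphericalContent_lt hr hd)

end ContentComparison

lemma one_sub_rpow_neg_div_rpow_le {p s x : ℝ} (hp : 0 ≤ p) (hs : 0 < s) (hx : 0 < x) :
    (1 - x ^ (-s)) / x ^ p ≤ s / (p + s) := by
  have bernoulli : 1 + (p + s) / s * (x ^ s - 1) ≤ x ^ p * x ^ s := by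
    calc
      _ ≤ (1 + (x ^ s - 1)) ^ ((p + s) / s) :=
        one_add_mul_self_le_rpow_one_add (by linarith [Real.rpow_pos_of_pos hx s])
          ((one_le_div hs).2 (by linarith))
      _ = _ := by
        rw [add_sub_cancel, ← Real.rpow_mul hx.le, mul_div_cancel₀ _ hs.ne', Real.rpow_add hx]
  rw [Real.rpow_neg hx.le, div_le_div_iff₀ (by positivity) (by positivity)]
  have hxs : 0 < x ^ s := by positivity
  field_simp at bernoulli ⊢
  linarith

lemma shell_constant_le {n r x : ℝ} (hn : 0 ≤ n) (hr : r < -n) (hx : 0 < x) :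
    2 ^ r / x ^ (2 * n) * (1 - x ^ (n + r)) ≤ -((n + r) / (n - r)) * 2 ^ r := by
  have bound := one_sub_rpow_neg_div_rpow_le (p := 2 * n) (s := -(n + r)) (by positivity)
    (by linarith) hx
  have denominator_eq : 2 * n + -(n + r) = n - r := by ring
  rw [neg_neg, denominator_eq, neg_div] at bound
  calc
    _ = (1 - x ^ (n + r)) / x ^ (2 * n) * 2 ^ r := by ring
    _ ≤ _ := by gcongr

lemma optimized_constant_le {n r : ℝ} (hn : 0 ≤ n) (hr : r < -n) :
    -((n + r) / (n - r)) * (2 * n / (n - r)) ^ (-((n + r) / (n - r))) * 2 ^ r ≤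
      -((n + r) / (n - r)) * 2 ^ r := by
  have num_pos : 0 < -(n + r) := by linarith
  have den_pos : 0 < n - r := by linarith
  rw [← neg_div]
  have base_le_one : 2 * n / (n - r) ≤ 1 := (div_le_one den_pos).2 (by linarith)
  gcongr
  exact mul_le_of_le_one_right (by positivity)
    (Real.rpow_le_one (by positivity) base_le_one (by positivity))

theorem spherical_content_lower_bounds_general (N : ℕ) (Ω : Set (EuclideanSpace ℝ (Fin N)))
    (r : ℝ) (hr : r < -(N : ℝ)) :
    ENNReal.ofReal (-(((N : ℝ) + r) / ((N : ℝ) - r)) * 2 ^ r) * upperContent N Ω r ≤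
      upperSphericalContent N Ω r := by
  have := N.cast_nonneg (α := ℝ)
  have num_pos : 0 < -((N : ℝ) + r) := by linarith
  have den_pos : 0 < (N : ℝ) - r := by linarith
  have constants_cancel : -(((N : ℝ) + r) / ((N : ℝ) - r)) * 2 ^ r *
      (((N : ℝ) - r) / -((N : ℝ) + r) * 2 ^ (-r)) = 1 := by
    rw [← neg_div, Real.rpow_neg two_pos.le, mul_mul_mul_comm, div_mul_div_cancel₀ den_pos.ne',
      div_self num_pos.ne', one_mul, mul_inv_cancel₀ (by positivity)]
  refine le_of_forall_gt_imp_ge_of_dense fun d hd => ?_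
  grw [upperContent_le_of_upperSphericalContent_lt hr hd]
  rw [← mul_assoc, ← ENNReal.ofReal_mul (by rw [← neg_div]; positivity), constants_cancel,
    ENNReal.ofReal_one, one_mul]

theorem spherical_content_lower_bounds
    (N : ℕ) (Ω : Set (EuclideanSpace ℝ (Fin N))) (hΩ : MeasurableSet Ω)
    (hfin : volume Ω < ⊤) (r : ℝ) (hr : r < -(N : ℝ)) :
    (∀ φ : ℝ, 1 < φ →
      ENNReal.ofReal ((2 : ℝ) ^ r / φ ^ (2 * (N : ℝ)) * (1 - φ ^ ((N : ℝ) + r))) *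
        upperContent N Ω r ≤ upperSphericalContent N Ω r) ∧
    ENNReal.ofReal
        (-(((N : ℝ) + r) / ((N : ℝ) - r)) *
          (2 * (N : ℝ) / ((N : ℝ) - r)) ^ (-(((N : ℝ) + r) / ((N : ℝ) - r))) * (2 : ℝ) ^ r) *
      upperContent N Ω r ≤ upperSphericalContent N Ω r := by
  have hN : (0 : ℝ) ≤ N := N.cast_nonneg
  refine ⟨fun φ hφ => ?_, ?_⟩
  · grw [shell_constant_le hN hr (one_pos.trans hφ),
      spherical_content_lower_bounds_general N Ω r hr]
  · grw [optimized_constant_le hN hr, spherical_content_lower_bounds_general N Ω r hr]
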